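/- (Single-step guarantee with approximate degrees, key inequality in the proof of Theorem 4.1.) Let (I, vtx, w) be a weighted k-instance family on a finite vertex set V, let ε ∈ (0,1) and ξ > 0, let W* ⊆ V be optimal, and let W ⊆ V be nonempty with W* ⊆ W. Suppose f : W → ℝ satisfies (1−ε)·deg_W(u) ≤ f(u) ≤ (1+ε)·deg_W(u) for every u ∈ W, and set ĥ(W) = (1/k)·∑_{u ∈ W} f(u). If some v ∈ W* satisfies f(v) ≤ k(1+ξ)·ĥ(W)/|W|, then ρ(W) ≥ (1−ε)/(k(1+ξ)(1+ε)) · ρ(W*). -/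

import Mathlib

/-!
Deleting a vertex `v` from an optimal set `W*` removes exactly the weight `deg_{W*}(v)`, and the
remaining set has density at most `ρ(W*)`; comparing the two gives `ρ(W*) ≤ deg_{W*}(v)`
(`rhoW_le_degW_of_optimal`). Degrees only grow when the vertex set does, so also
`ρ(W*) ≤ deg_W(v)`. On the other side, double counting gives `∑_{u ∈ W} deg_W(u) = k τ(W)`
(`sum_degW`), so the hypothesis on `f v` bounds it by `k (1+ξ) (1+ε) ρ(W)`. The chain
`(1-ε) ρ(W*) ≤ (1-ε) deg_W(v) ≤ f v ≤ k (1+ξ) (1+ε) ρ(W)` is the claim.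
-/

open Finset MeasureTheory

open scoped Classical

variable {α ι : Type*} [DecidableEq α]

noncomputable def tauW (I : Finset ι) (vtx : ι → Finset α) (w : ι → ℝ) (W : Finset α) : ℝ :=
  ∑ i ∈ I.filter (fun i => vtx i ⊆ W), w i

noncomputable def degW (I : Finset ι) (vtx : ι → Finset α) (w : ι → ℝ) (W : Finset α)
    (v : α) : ℝ :=
  ∑ i ∈ I.filter (fun i => vtx i ⊆ W ∧ v ∈ vtx i), w i

noncomputable def rhoW (I : Finset ι) (vtx : ι → Finset α) (w : ι → ℝ) (W : Finset α) : ℝ :=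
  tauW I vtx w W / (W.card : ℝ)

def OptimalTMDS (I : Finset ι) (vtx : ι → Finset α) (w : ι → ℝ) (V Wstar : Finset α) : Prop :=
  Wstar ⊆ V ∧ Wstar.Nonempty ∧
    ∀ W ⊆ V, W.Nonempty → rhoW I vtx w W ≤ rhoW I vtx w Wstar

noncomputable def batchL (k : ℕ) (ξ : ℝ) (I : Finset ι) (vtx : ι → Finset α) (w : ι → ℝ)
    (W : Finset α) : Finset α :=
  W.filter (fun v => degW I vtx w W v ≤ (k : ℝ) * (1 + ξ) * tauW I vtx w W / (W.card : ℝ))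

theorem tauW_erase_add_degW (I : Finset ι) (vtx : ι → Finset α) (w : ι → ℝ) (W : Finset α)
    (v : α) : tauW I vtx w (W.erase v) + degW I vtx w W v = tauW I vtx w W := by
  unfold tauW degW
  simp only [Finset.sum_filter]
  rw [← Finset.sum_add_distrib]
  refine Finset.sum_congr rfl fun i _ => ?_
  by_cases h1 : vtx i ⊆ W <;> by_cases h2 : v ∈ vtx i <;> simp [Finset.subset_erase, h1, h2]

theorem degW_mono {I : Finset ι} {vtx : ι → Finset α} {w : ι → ℝ} (hw : ∀ i ∈ I, 0 ≤ w i)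
    {W W' : Finset α} (h : W ⊆ W') (v : α) : degW I vtx w W v ≤ degW I vtx w W' v := by
  unfold degW
  refine Finset.sum_le_sum_of_subset_of_nonneg ?_ ?_
  · intro i hi
    rw [Finset.mem_filter] at hi ⊢
    exact ⟨hi.1, hi.2.1.trans h, hi.2.2⟩
  · intro i hi _
    exact hw i (Finset.mem_filter.1 hi).1

/-- Each instance inside `W` is counted once for each of its `k` vertices. -/
theorem sum_degW {k : ℕ} {I : Finset ι} {vtx : ι → Finset α} (w : ι → ℝ)
    (hcard : ∀ i ∈ I, (vtx i).card = k) (W : Finset α) :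
    ∑ u ∈ W, degW I vtx w W u = k * tauW I vtx w W := by
  unfold tauW degW
  simp only [Finset.sum_filter]
  rw [Finset.sum_comm, Finset.mul_sum]
  refine Finset.sum_congr rfl fun i hi => ?_
  by_cases h : vtx i ⊆ W
  · simp only [h, true_and, if_true]
    rw [← Finset.sum_filter, Finset.sum_const, nsmul_eq_mul, ← hcard i hi]
    congr 3
    ext u
    simp only [Finset.mem_filter]
    exact ⟨fun hu => hu.2, fun hu => ⟨h hu, hu⟩⟩
  · simp [h]

theorem rhoW_le_degW_of_optimal {k : ℕ} (hk : 2 ≤ k) {V : Finset α} {I : Finset ι}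
    {vtx : ι → Finset α} {w : ι → ℝ} (hcard : ∀ i ∈ I, (vtx i).card = k)
    {Wstar : Finset α} (hopt : OptimalTMDS I vtx w V Wstar) {v : α} (hv : v ∈ Wstar) :
    rhoW I vtx w Wstar ≤ degW I vtx w Wstar v := by
  obtain ⟨hV, hne, hmax⟩ := hopt
  have hpos : (0 : ℝ) < Wstar.card := by exact_mod_cast hne.card_pos
  have herase : ((Wstar.erase v).card : ℝ) = Wstar.card - 1 := by
    rw [Finset.cast_card_erase_of_mem hv]
  have htau : tauW I vtx w Wstar = rhoW I vtx w Wstar * Wstar.card := by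
    unfold rhoW
    field_simp
  have hle : tauW I vtx w (Wstar.erase v) ≤ rhoW I vtx w Wstar * (Wstar.card - 1) := by
    rw [← herase]
    rcases (Wstar.erase v).eq_empty_or_nonempty with h0 | h1
    · -- No instance has an empty vertex set, so both sides vanish.
      have h : tauW I vtx w (∅ : Finset α) = 0 := by
        unfold tauW
        refine Finset.sum_eq_zero fun i hi => ?_
        rw [Finset.mem_filter, Finset.subset_empty] at hi
        have := hcard i hi.1
        rw [hi.2, Finset.card_empty] at this
        omega
      rw [h0, h]
      simp
    · have hp : (0 : ℝ) < (Wstar.erase v).card := by exact_mod_cast h1.card_pos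
      exact (div_le_iff₀ hp).1 (hmax _ ((Finset.erase_subset _ _).trans hV) h1)
  have := tauW_erase_add_degW I vtx w Wstar v
  linarith

/-- Single-step guarantee with `(1±ε)`-approximate degrees: if
`f` approximates `deg_W` within `(1±ε)` on `W ⊇ W*`, `ĥ(W) = (1/k)∑_{u∈W} f(u)`, and some
`v ∈ W*` satisfies `f(v) ≤ k(1+ξ)·ĥ(W)/|W|`, then
`ρ(W) ≥ (1−ε)/(k(1+ξ)(1+ε)) · ρ(W*)`. -/
theorem stmt14
    (k : ℕ) (hk : 2 ≤ k)
    (V : Finset α) (I : Finset ι) (vtx : ι → Finset α) (w : ι → ℝ)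
    (hvtx : ∀ i ∈ I, vtx i ⊆ V) (hcard : ∀ i ∈ I, (vtx i).card = k)
    (hw : ∀ i ∈ I, 0 ≤ w i)
    (ε ξ : ℝ) (hε : ε ∈ Set.Ioo (0 : ℝ) 1) (hξ : 0 < ξ)
    (Wstar : Finset α) (hopt : OptimalTMDS I vtx w V Wstar)
    (W : Finset α) (hWV : W ⊆ V) (hWne : W.Nonempty) (hsub : Wstar ⊆ W)
    (f : α → ℝ)
    (hf : ∀ u ∈ W, (1 - ε) * degW I vtx w W u ≤ f u ∧ f u ≤ (1 + ε) * degW I vtx w W u)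
    (v : α) (hv : v ∈ Wstar)
    (hfv : f v ≤ (k : ℝ) * (1 + ξ) * ((1 / (k : ℝ)) * ∑ u ∈ W, f u) / (W.card : ℝ)) :
    (1 - ε) / ((k : ℝ) * (1 + ξ) * (1 + ε)) * rhoW I vtx w Wstar ≤ rhoW I vtx w W := by
  obtain ⟨hε0, hε1⟩ := hε
  have hk0 : (0 : ℝ) < k := by exact_mod_cast (by omega : 0 < k)
  have hW0 : (0 : ℝ) < W.card := by exact_mod_cast hWne.card_pos
  have hlow : (1 - ε) * rhoW I vtx w Wstar ≤ f v :=
    (mul_le_mul_of_nonneg_left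
      ((rhoW_le_degW_of_optimal hk hcard hopt hv).trans (degW_mono hw hsub v))
      (by linarith)).trans (hf v (hsub hv)).1
  have hsum : ∑ u ∈ W, f u ≤ (1 + ε) * (k * tauW I vtx w W) := by
    rw [← sum_degW w hcard W, Finset.mul_sum]
    exact Finset.sum_le_sum fun u hu => (hf u hu).2
  have hup : f v ≤ (k : ℝ) * (1 + ξ) * (1 + ε) * rhoW I vtx w W := by
    calc f v ≤ (k : ℝ) * (1 + ξ) * ((1 / (k : ℝ)) * ∑ u ∈ W, f u) / (W.card : ℝ) := hfv
      _ ≤ (k : ℝ) * (1 + ξ) * ((1 / (k : ℝ)) * ((1 + ε) * (k * tauW I vtx w W))) /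
          (W.card : ℝ) := by gcongr
      _ = (k : ℝ) * (1 + ξ) * (1 + ε) * rhoW I vtx w W := by
        unfold rhoW
        field_simp
  rw [div_mul_eq_mul_div, div_le_iff₀ (by positivity)]
  linarith
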